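/- Let G be a finite simple graph with 2n vertices and edge weights in a commutative ring, let 2 ≤ k ≤ n, and let a_1, b_1, a_2, b_2, …, a_k, b_k be distinct vertices such that G is noncrossing with respect to the cyclic sequence (a_1, b_1, a_2, b_2, …, a_k, b_k). Set A = {a_1,…,a_k} and B = {b_1,…,b_k}. Then for every partition of A into two disjoint subsets A_1, A_2: Σ_{W⊆B, |W| even} M(G−W)·M(G−A−(B∖W)) = Σ_{Y⊆B, |Y| ≡ |A_1| (mod 2)} M(G−A_1−Y)·M(G−A_2−(B∖Y)). -/

import Mathlib

/-- A perfect matching of the induced subgraph of `G` on the vertex set `s`,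
represented as a set `m` of edges of `G`: every edge of `m` is an edge of `G`
with both endpoints in `s`, and every vertex of `s` lies in exactly one edge of `m`. -/
def IsPMOn {α : Type*} (G : SimpleGraph α) (s : Finset α) (m : Finset (Sym2 α)) : Prop :=
  (∀ e ∈ m, e ∈ G.edgeSet ∧ ∀ v ∈ e, v ∈ s) ∧ ∀ v ∈ s, ∃! e, e ∈ m ∧ v ∈ e

/-- The number of perfect matchings of the induced subgraph of `G` on `s`. -/
noncomputable def pmCount {α : Type*} (G : SimpleGraph α) (s : Finset α) : ℕ :=
  Nat.card {m : Finset (Sym2 α) // IsPMOn G s m}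

open Classical in
/-- The sum, over all perfect matchings of the induced subgraph of `G` on `s`,
of the product of the weights of the edges of the matching. -/
noncomputable def pmSum {α R : Type*} [Fintype α] [DecidableEq α] [CommRing R]
    (G : SimpleGraph α) (w : Sym2 α → R) (s : Finset α) : R :=
  ∑ m ∈ Finset.univ.filter (fun m : Finset (Sym2 α) => IsPMOn G s m), ∏ e ∈ m, w e

/-- There are two vertex-disjoint paths in `G`, one joining `x₁` to `y₁` and one joining
`x₂` to `y₂`, whose internal vertices avoid `S`. -/
def DisjointPaths {α : Type*} (G : SimpleGraph α) (S : Set α) (x₁ y₁ x₂ y₂ : α) : Prop :=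
  ∃ (p : G.Walk x₁ y₁) (q : G.Walk x₂ y₂), p.IsPath ∧ q.IsPath ∧
    (∀ u ∈ p.support, u ∉ q.support) ∧
    (∀ u ∈ p.support, u ≠ x₁ → u ≠ y₁ → u ∉ S) ∧
    (∀ u ∈ q.support, u ≠ x₂ → u ≠ y₂ → u ∉ S)

/-- `G` is noncrossing with respect to the cyclic sequence given by the list `L`:
there are no indices `i < j < k < l` such that `G` contains two vertex-disjoint paths,
one joining `L[i]` to `L[k]` and one joining `L[j]` to `L[l]`, whose internal vertices
avoid the vertices of `L`. -/
def NoncrossingList {α : Type*} (G : SimpleGraph α) (L : List α) : Prop :=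
  ∀ i j k l : Fin L.length, i < j → j < k → k < l →
    ¬ DisjointPaths G {x | x ∈ L} (L.get i) (L.get k) (L.get j) (L.get l)

/-- `U, W` form a bipartition of the vertices of `G`. -/
def IsBipartition {α : Type*} [Fintype α] [DecidableEq α]
    (G : SimpleGraph α) (U W : Finset α) : Prop :=
  Disjoint U W ∧ U ∪ W = Finset.univ ∧
    ∀ ⦃x y⦄, G.Adj x y → ((x ∈ U ∧ y ∈ W) ∨ (x ∈ W ∧ y ∈ U))

/-- `P` is an `MH`-alternating path, where `MH` is the unique perfect matching of the
induced subgraph of `G` on the vertex set `sH`: `P` is a (nontrivial) path, among any two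
consecutive edges of `P` exactly one lies in `MH`, and for each endpoint the incident edge
of `P` lies in `MH` iff the endpoint belongs to `sH`. -/
def IsAltPath {α : Type*} (G : SimpleGraph α) (sH : Finset α) (MH : Finset (Sym2 α))
    {x y : α} (P : G.Walk x y) : Prop :=
  P.IsPath ∧ P.edges ≠ [] ∧
  P.edges.Chain' (fun e f => e ∈ MH ↔ f ∉ MH) ∧
  (∀ e ∈ P.edges.head?, (e ∈ MH ↔ x ∈ sH)) ∧
  (∀ e ∈ P.edges.getLast?, (e ∈ MH ↔ y ∈ sH))

/-- A family of pairwise vertex-disjoint `MH`-alternating paths in `G` whose set of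
path-endpoints is exactly `A`, each vertex of `A` being an endpoint of exactly one
path of the family. -/
def IsAltPathNest {α : Type*} (G : SimpleGraph α) (sH : Finset α) (MH : Finset (Sym2 α))
    (A : Finset α) (F : Finset (Σ x : α, Σ y : α, G.Walk x y)) : Prop :=
  (∀ p ∈ F, IsAltPath G sH MH p.2.2) ∧
  (∀ p ∈ F, ∀ q ∈ F, p ≠ q → ∀ u ∈ p.2.2.support, u ∉ q.2.2.support) ∧
  (∀ p ∈ F, p.1 ∈ A ∧ p.2.1 ∈ A) ∧
  (∀ v ∈ A, ∃! p, p ∈ F ∧ (v = p.1 ∨ v = p.2.1))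

/-- A 1-factor on `{1, …, n}`: a partition of `Fin n` into pairs, each pair recorded
as an ordered pair `(i, j)` with `i < j`. -/
def IsOneFactor (n : ℕ) (F : Finset (Fin n × Fin n)) : Prop :=
  (∀ p ∈ F, p.1 < p.2) ∧ ∀ v : Fin n, ∃! p, p ∈ F ∧ (v = p.1 ∨ v = p.2)

/-- The crossing number of a 1-factor: the number of pairs of pairs
`(i,j), (k,l)` in `F` with `i < k < j < l`. -/
def crossingNumber (n : ℕ) (F : Finset (Fin n × Fin n)) : ℕ :=
  ((F ×ˢ F).filter (fun q => q.1.1 < q.2.1 ∧ q.2.1 < q.1.2 ∧ q.1.2 < q.2.2)).card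

/-!
Put `T = A ∪ B` and superpose a perfect matching of `G - X` with one of `G - (T \ X)`, where
`X ⊆ T`. The vertices of `T` are covered once and all others twice, so the components are cycles,
doubled edges, and paths whose ends are exactly the vertices of `T`. If such a path joins two
vertices of the cyclic sequence, then by the noncrossing condition the vertices strictly between
them are joined among themselves; there is an even number of them, so the two ends sit at positions
of opposite parity. In particular no path joins two vertices of `A`. Swapping the two matchings
along the paths that end in `A₁` is therefore a weight-preserving involution, and it changes
`X ∩ A` from `∅` to `A₁`. The parity conditions on `W` and `Y` only discard zero terms, since a
graph with an odd number of vertices has no perfect matching.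
-/

section Paths

variable {α : Type*} {H : SimpleGraph α} {x y z u : α} {p : H.Walk x y}

theorem encard_neighborSet_toSubgraph_of_isPath (hp : p.IsPath) (hz : z ∈ p.support)
    (hzx : z ≠ x) (hzy : z ≠ y) : (p.toSubgraph.neighborSet z).encard = 2 := by
  obtain ⟨i, rfl, hi⟩ := SimpleGraph.Walk.mem_support_iff_exists_getVert.1 hz
  have hi_start : i ≠ 0 := by
    rintro rfl
    exact hzx p.getVert_zero
  have hi_end : i ≠ p.length := by
    rintro rfl
    exact hzy p.getVert_length
  rw [← p.finite_neighborSet_toSubgraph.cast_ncard_eq,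
    hp.ncard_neighborSet_toSubgraph_internal_eq_two hi_start (by lia), Nat.cast_ofNat]

theorem nontrivial_neighborSet_of_isPath (hp : p.IsPath) (hz : z ∈ p.support)
    (hzx : z ≠ x) (hzy : z ≠ y) : (H.neighborSet z).Nontrivial := by
  rw [← Set.one_lt_encard_iff_nontrivial]
  calc 1 < (p.toSubgraph.neighborSet z).encard := by
        rw [encard_neighborSet_toSubgraph_of_isPath hp hz hzx hzy]
        exact Nat.one_lt_ofNat
    _ ≤ (H.neighborSet z).encard := Set.encard_le_encard (p.toSubgraph.neighborSet_subset z)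

theorem neighborSet_toSubgraph_eq_of_isPath (hp : p.IsPath) (hxy : x ≠ y)
    (hx : (H.neighborSet x).Subsingleton) (hy : (H.neighborSet y).Subsingleton)
    (hdeg : (H.neighborSet u).encard ≤ 2) (hu : u ∈ p.support) :
    p.toSubgraph.neighborSet u = H.neighborSet u := by
  refine p.finite_neighborSet_toSubgraph.eq_of_subset_of_encard_le
    (p.toSubgraph.neighborSet_subset u) ?_
  have hp_not_nil : ¬ p.Nil := SimpleGraph.Walk.not_nil_of_ne hxy
  by_cases hux : u = x
  · subst hux
    rw [hp.neighborSet_toSubgraph_startpoint hp_not_nil, Set.encard_singleton]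
    exact Set.encard_le_one_iff_subsingleton.2 hx
  by_cases huy : u = y
  · subst huy
    rw [hp.neighborSet_toSubgraph_endpoint hp_not_nil, Set.encard_singleton]
    exact Set.encard_le_one_iff_subsingleton.2 hy
  · rwa [encard_neighborSet_toSubgraph_of_isPath hp hu hux huy]

theorem eq_or_eq_of_reachable_of_subsingleton_neighborSet
    (hdeg : ∀ v, (H.neighborSet v).encard ≤ 2) (hx : (H.neighborSet x).Subsingleton)
    (hy : (H.neighborSet y).Subsingleton) (hz : (H.neighborSet z).Subsingleton)
    (hne : x ≠ y) (hxy : H.Reachable x y) (hxz : H.Reachable x z) : z = x ∨ z = y := by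
  obtain ⟨p, hp⟩ := hxy.exists_isPath
  have support_closed {u v : α} (hu : u ∈ p.support) (huv : H.Adj u v) : v ∈ p.support := by
    have : v ∈ p.toSubgraph.neighborSet u := by
      rwa [neighborSet_toSubgraph_eq_of_isPath hp hne hx hy (hdeg u) hu]
    exact p.mem_verts_toSubgraph.1 (p.toSubgraph.edge_vert this.symm)
  have mem_support_of_reachable {v : α} (hv : H.Reachable x v) : v ∈ p.support := by
    rw [SimpleGraph.reachable_iff_reflTransGen] at hv
    induction hv with
    | refl => exact p.start_mem_support
    | tail _ huv ih => exact support_closed ih huv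
  by_contra! hz_internal
  exact Set.not_subsingleton_iff.2
    (nontrivial_neighborSet_of_isPath hp (mem_support_of_reachable hxz)
      hz_internal.1 hz_internal.2) hz

end Paths

section ReachableFrom

variable {α : Type*} {H : SimpleGraph α} {S : Set α} {u v : α}

/-- The union of the connected components of `H` that meet `S`. -/
def reachableFrom (H : SimpleGraph α) (S : Set α) : Set α :=
  {v | ∃ t ∈ S, H.Reachable t v}

theorem subset_reachableFrom (H : SimpleGraph α) (S : Set α) : S ⊆ reachableFrom H S :=
  fun v hv => ⟨v, hv, .rfl⟩

theorem mem_reachableFrom_congr (h : H.Reachable u v) :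
    u ∈ reachableFrom H S ↔ v ∈ reachableFrom H S :=
  exists_congr fun _ => and_congr_right fun _ => ⟨(·.trans h), (·.trans h.symm)⟩

end ReachableFrom

section Exchange

variable {β : Type*} {p : β → Prop} {s t : Finset β}

open Classical in
/-- The finite set that agrees with `t` where `p` holds and with `s` elsewhere. It is applied both
to sets of vertices and to sets of edges, where it expresses swapping two matchings on a union of
connected components. -/
noncomputable def exchange (p : β → Prop) (s t : Finset β) : Finset β :=
  {x ∈ s | ¬ p x} ∪ {x ∈ t | p x}

theorem mem_exchange {x : β} : x ∈ exchange p s t ↔ x ∈ s ∧ ¬ p x ∨ x ∈ t ∧ p x := by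
  simp only [exchange, Finset.mem_union, Finset.mem_filter]

theorem exchange_exchange (p : β → Prop) (s t : Finset β) :
    exchange p (exchange p s t) (exchange p t s) = s := by
  ext x
  simp only [mem_exchange]
  tauto

theorem compl_exchange [Fintype β] [DecidableEq β] (p : β → Prop) (s t : Finset β) :
    (exchange p s t)ᶜ = exchange p sᶜ tᶜ := by
  ext x
  simp only [mem_exchange, Finset.mem_compl]
  tauto

theorem sdiff_exchange_sdiff [DecidableEq β] (p : β → Prop) (h : s ⊆ t) :
    t \ exchange p s (t \ s) = exchange p (t \ s) s := by
  ext x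
  have := @h x
  simp only [mem_exchange, Finset.mem_sdiff]
  tauto

theorem prod_exchange_mul_prod_exchange {M : Type*} [CommMonoid M] (f : β → M) (p : β → Prop)
    (s t : Finset β) :
    (∏ x ∈ exchange p s t, f x) * ∏ x ∈ exchange p t s, f x =
      (∏ x ∈ s, f x) * ∏ x ∈ t, f x := by
  classical
  have prod_exchange (s t : Finset β) :
      ∏ x ∈ exchange p s t, f x = (∏ x ∈ s with ¬ p x, f x) * ∏ x ∈ t with p x, f x := by
    have hdisj : Disjoint {x ∈ s | ¬ p x} {x ∈ t | p x} :=
      Finset.disjoint_filter_filter_not t s p |>.symm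
    rw [← Finset.prod_union hdisj]
    exact Finset.prod_congr (by ext; simp [mem_exchange]) fun _ _ => rfl
  rw [prod_exchange, prod_exchange, mul_mul_mul_comm, mul_comm,
    ← Finset.prod_filter_mul_prod_filter_not s p, ← Finset.prod_filter_mul_prod_filter_not t p]
  ac_rfl

end Exchange

section PerfectMatchings

variable {α : Type*} {G : SimpleGraph α} {s s₁ s₂ : Finset α} {m m₁ m₂ : Finset (Sym2 α)} {u v : α}

theorem IsPMOn.mem_left (h : IsPMOn G s m) (huv : s(u, v) ∈ m) : u ∈ s :=
  (h.1 _ huv).2 u (Sym2.mem_mk_left u v)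

theorem IsPMOn.subsingleton_partners (h : IsPMOn G s m) (u : α) :
    {v | s(u, v) ∈ m}.Subsingleton := fun v hv v' hv' =>
  Sym2.congr_right.1 <| (h.2 u (h.mem_left hv)).unique
    ⟨hv, Sym2.mem_mk_left u v⟩ ⟨hv', Sym2.mem_mk_left u v'⟩

theorem IsPMOn.even_card (h : IsPMOn G s m) : Even s.card := by
  classical
  have hs : s = m.biUnion Sym2.toFinset := by
    ext v
    simp only [Finset.mem_biUnion, Sym2.mem_toFinset]
    exact ⟨fun hv => (h.2 v hv).exists, fun ⟨e, he, hv⟩ => (h.1 e he).2 v hv⟩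
  have edges_disjoint : (m : Set (Sym2 α)).PairwiseDisjoint Sym2.toFinset := by
    intro e he f hf hef
    refine Finset.disjoint_left.2 fun v hve hvf => hef ?_
    rw [Sym2.mem_toFinset] at hve hvf
    exact (h.2 v ((h.1 e he).2 v hve)).unique ⟨he, hve⟩ ⟨hf, hvf⟩
  have card_edge (e : Sym2 α) (he : e ∈ m) : e.toFinset.card = 2 :=
    Sym2.card_toFinset_of_not_isDiag e (G.not_isDiag_of_mem_edgeSet (h.1 e he).1)
  rw [hs, Finset.card_biUnion edges_disjoint, Finset.sum_const_nat card_edge]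
  exact even_two.mul_left _

theorem IsPMOn.filter {p : α → Prop} {q : Sym2 α → Prop} [DecidablePred p] [DecidablePred q]
    (h : IsPMOn G s m) (hpq : ∀ e ∈ m, ∀ v ∈ e, q e ↔ p v) :
    IsPMOn G {v ∈ s | p v} {e ∈ m | q e} := by
  simp only [IsPMOn, Finset.mem_filter, and_imp]
  refine ⟨fun e he hqe => ⟨(h.1 e he).1, fun v hv => ⟨(h.1 e he).2 v hv, ?_⟩⟩,
    fun v hv hpv => ?_⟩
  · exact (hpq e he v hv).1 hqe
  · obtain ⟨e, ⟨he, hve⟩, huniq⟩ := h.2 v hv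
    exact ⟨e, ⟨⟨he, (hpq e he v hve).2 hpv⟩, hve⟩, fun f hf => huniq f ⟨hf.1.1, hf.2⟩⟩

theorem IsPMOn.union_of_disjoint [DecidableEq α] (h₁ : IsPMOn G s₁ m₁) (h₂ : IsPMOn G s₂ m₂)
    (hs : Disjoint s₁ s₂) : IsPMOn G (s₁ ∪ s₂) (m₁ ∪ m₂) := by
  have not_mem_both {v : α} (hv₁ : v ∈ s₁) (hv₂ : v ∈ s₂) : False :=
    Finset.disjoint_left.1 hs hv₁ hv₂
  simp only [IsPMOn, Finset.mem_union]
  refine ⟨?_, ?_⟩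
  · rintro e (he | he)
    · exact ⟨(h₁.1 e he).1, fun v hv => .inl ((h₁.1 e he).2 v hv)⟩
    · exact ⟨(h₂.1 e he).1, fun v hv => .inr ((h₂.1 e he).2 v hv)⟩
  · rintro v (hv | hv)
    · obtain ⟨e, ⟨he, hve⟩, huniq⟩ := h₁.2 v hv
      refine ⟨e, ⟨.inl he, hve⟩, fun f ⟨hf, hvf⟩ => huniq f ⟨hf.resolve_right fun hf₂ => ?_, hvf⟩⟩
      exact not_mem_both hv ((h₂.1 f hf₂).2 v hvf)
    · obtain ⟨e, ⟨he, hve⟩, huniq⟩ := h₂.2 v hv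
      refine ⟨e, ⟨.inr he, hve⟩, fun f ⟨hf, hvf⟩ => huniq f ⟨hf.resolve_left fun hf₁ => ?_, hvf⟩⟩
      exact not_mem_both ((h₁.1 f hf₁).2 v hvf) hv

theorem IsPMOn.exchange {p : α → Prop} {q : Sym2 α → Prop} (h₁ : IsPMOn G s₁ m₁)
    (h₂ : IsPMOn G s₂ m₂) (hpq₁ : ∀ e ∈ m₁, ∀ v ∈ e, q e ↔ p v)
    (hpq₂ : ∀ e ∈ m₂, ∀ v ∈ e, q e ↔ p v) :
    IsPMOn G (exchange p s₁ s₂) (exchange q m₁ m₂) := by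
  classical
  have := (h₁.filter fun e he v hv => not_congr (hpq₁ e he v hv)).union_of_disjoint
    (h₂.filter hpq₂) (Finset.disjoint_filter_filter_not s₂ s₁ p).symm
  convert this <;> ext <;> simp only [mem_exchange, Finset.mem_union, Finset.mem_filter]

theorem pmSum_eq_zero_of_not_even_card {R : Type*} [Fintype α] [DecidableEq α] [CommRing R]
    (w : Sym2 α → R) (hs : ¬ Even s.card) : pmSum G w s = 0 := by
  classical
  exact Finset.sum_eq_zero fun _ hm => absurd (Finset.mem_filter.1 hm).2.even_card hs

end PerfectMatchings

section Superpositions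

variable {α : Type*} {G : SimpleGraph α} {m₁ m₂ : Finset (Sym2 α)}

/-- The graph whose edges are those of the two matchings `m₁` and `m₂`. A common edge becomes a
single edge, which is a connected component of its own. -/
def superposition (m₁ m₂ : Finset (Sym2 α)) : SimpleGraph α :=
  SimpleGraph.fromEdgeSet (m₁ ∪ m₂ : Set (Sym2 α))

theorem superposition_exchange (q : Sym2 α → Prop) (m₁ m₂ : Finset (Sym2 α)) :
    superposition (exchange q m₁ m₂) (exchange q m₂ m₁) = superposition m₁ m₂ := by
  unfold superposition
  congr 1
  ext e
  simp only [Set.mem_union, Finset.mem_coe, mem_exchange]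
  tauto

theorem reachable_superposition {e : Sym2 α} {u v : α} (he : e ∈ m₁ ∨ e ∈ m₂) (hu : u ∈ e)
    (hv : v ∈ e) : (superposition m₁ m₂).Reachable u v := by
  by_cases huv : u = v
  · exact huv ▸ .rfl
  · obtain rfl := (Sym2.mem_and_mem_iff huv).1 ⟨hu, hv⟩
    exact SimpleGraph.Adj.reachable ((SimpleGraph.fromEdgeSet_adj _).2 ⟨he, huv⟩)

theorem edge_meets_reachableFrom_iff {S : Set α} {e : Sym2 α} {v : α} (he : e ∈ m₁ ∨ e ∈ m₂)
    (hv : v ∈ e) : (∃ u ∈ e, u ∈ reachableFrom (superposition m₁ m₂) S) ↔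
      v ∈ reachableFrom (superposition m₁ m₂) S :=
  ⟨fun ⟨_, hu, huC⟩ => (mem_reachableFrom_congr (reachable_superposition he hu hv)).1 huC,
    fun hvC => ⟨v, hv, hvC⟩⟩

theorem neighborSet_superposition_subset (m₁ m₂ : Finset (Sym2 α)) (u : α) :
    (superposition m₁ m₂).neighborSet u ⊆ {v | s(u, v) ∈ m₁} ∪ {v | s(u, v) ∈ m₂} :=
  fun _ huv => ((SimpleGraph.fromEdgeSet_adj _).1 huv).1

variable [Fintype α] [DecidableEq α] {T X : Finset α}

/-- Perfect matchings `m₁` of `G - X` and `m₂` of `G - (T \ X)` for a subset `X` of `T`: in their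
superposition the vertices of `T` are covered once and all other vertices twice. -/
structure IsSuperposition (G : SimpleGraph α) (T X : Finset α) (m₁ m₂ : Finset (Sym2 α)) :
    Prop where
  subset : X ⊆ T
  left : IsPMOn G Xᶜ m₁
  right : IsPMOn G (T \ X)ᶜ m₂

namespace IsSuperposition

theorem superposition_le (h : IsSuperposition G T X m₁ m₂) : superposition m₁ m₂ ≤ G := by
  intro u v huv
  rcases ((SimpleGraph.fromEdgeSet_adj _).1 huv).1 with he | he
  · exact (h.left.1 _ he).1
  · exact (h.right.1 _ he).1

theorem encard_neighborSet_le_two (h : IsSuperposition G T X m₁ m₂) (u : α) :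
    ((superposition m₁ m₂).neighborSet u).encard ≤ 2 :=
  calc ((superposition m₁ m₂).neighborSet u).encard
      ≤ ({v | s(u, v) ∈ m₁} ∪ {v | s(u, v) ∈ m₂}).encard :=
        Set.encard_le_encard (neighborSet_superposition_subset m₁ m₂ u)
    _ ≤ {v | s(u, v) ∈ m₁}.encard + {v | s(u, v) ∈ m₂}.encard := Set.encard_union_le _ _
    _ ≤ 1 + 1 := add_le_add
        (Set.encard_le_one_iff_subsingleton.2 (h.left.subsingleton_partners u))
        (Set.encard_le_one_iff_subsingleton.2 (h.right.subsingleton_partners u))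
    _ = 2 := one_add_one_eq_two

theorem subsingleton_neighborSet (h : IsSuperposition G T X m₁ m₂) {u : α} (hu : u ∈ T) :
    ((superposition m₁ m₂).neighborSet u).Subsingleton := by
  by_cases huX : u ∈ X
  · refine (h.right.subsingleton_partners u).anti fun v huv => ?_
    exact (neighborSet_superposition_subset m₁ m₂ u huv).resolve_left fun he =>
      Finset.mem_compl.1 (h.left.mem_left he) huX
  · refine (h.left.subsingleton_partners u).anti fun v huv => ?_
    exact (neighborSet_superposition_subset m₁ m₂ u huv).resolve_right fun he =>
      Finset.mem_compl.1 (h.right.mem_left he) (Finset.mem_sdiff.2 ⟨hu, huX⟩)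

theorem exchange (h : IsSuperposition G T X m₁ m₂) {p : α → Prop} {q : Sym2 α → Prop}
    (hpq : ∀ e, e ∈ m₁ ∨ e ∈ m₂ → ∀ v ∈ e, q e ↔ p v) :
    IsSuperposition G T (exchange p X (T \ X)) (exchange q m₁ m₂) (exchange q m₂ m₁) where
  subset v hv := by
    rcases mem_exchange.1 hv with ⟨hvX, -⟩ | ⟨hvX, -⟩
    · exact h.subset hvX
    · exact (Finset.mem_sdiff.1 hvX).1
  left := by
    rw [compl_exchange]
    exact h.left.exchange h.right (fun e he => hpq e (.inl he)) fun e he => hpq e (.inr he)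
  right := by
    rw [sdiff_exchange_sdiff p h.subset, compl_exchange]
    exact h.right.exchange h.left (fun e he => hpq e (.inr he)) fun e he => hpq e (.inl he)

open Classical in
theorem even_card_filter_reachableFrom (h : IsSuperposition G T X m₁ m₂) (S : Set α) :
    Even {v ∈ T | v ∈ reachableFrom (superposition m₁ m₂) S}.card := by
  set C := reachableFrom (superposition m₁ m₂) S
  have even_left : Even {v ∈ Xᶜ | v ∈ C}.card :=
    (h.left.filter fun e he v hv => edge_meets_reachableFrom_iff (.inl he) hv).even_card
  have even_right : Even {v ∈ (T \ X)ᶜ | v ∈ C}.card :=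
    (h.right.filter fun e he v hv => edge_meets_reachableFrom_iff (.inr he) hv).even_card
  have card_add_card_sdiff {s t : Finset α} (hst : s ⊆ t) :
      {v ∈ s | v ∈ C}.card + {v ∈ t \ s | v ∈ C}.card = {v ∈ t | v ∈ C}.card := by
    rw [← Finset.card_union_of_disjoint (Finset.disjoint_filter_filter Finset.disjoint_sdiff),
      ← Finset.filter_union, Finset.union_sdiff_of_subset hst]
  have hX := card_add_card_sdiff X.subset_univ
  have hTX := card_add_card_sdiff (T \ X).subset_univ
  have hT := card_add_card_sdiff h.subset
  rw [← Finset.compl_eq_univ_sdiff] at hX hTX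
  rw [Nat.even_iff] at *
  lia

theorem eq_or_eq_of_reachable (h : IsSuperposition G T X m₁ m₂) {x y z : α} (hx : x ∈ T)
    (hy : y ∈ T) (hz : z ∈ T) (hne : x ≠ y) (hxy : (superposition m₁ m₂).Reachable x y)
    (hxz : (superposition m₁ m₂).Reachable x z) : z = x ∨ z = y :=
  eq_or_eq_of_reachable_of_subsingleton_neighborSet h.encard_neighborSet_le_two
    (h.subsingleton_neighborSet hx) (h.subsingleton_neighborSet hy)
    (h.subsingleton_neighborSet hz) hne hxy hxz

theorem disjointPaths (h : IsSuperposition G T X m₁ m₂) {x₁ y₁ x₂ y₂ : α}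
    (h₁ : (superposition m₁ m₂).Reachable x₁ y₁) (h₂ : (superposition m₁ m₂).Reachable x₂ y₂)
    (h₁₂ : ¬ (superposition m₁ m₂).Reachable x₁ x₂) : DisjointPaths G T x₁ y₁ x₂ y₂ := by
  have internal_notMem {x y : α} {p : (superposition m₁ m₂).Walk x y} (hp : p.IsPath) (u : α)
      (hu : u ∈ p.support) (hux : u ≠ x) (huy : u ≠ y) : u ∉ (T : Set α) := fun huT =>
    Set.not_subsingleton_iff.2 (nontrivial_neighborSet_of_isPath hp hu hux huy)
      (h.subsingleton_neighborSet huT)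
  obtain ⟨p, hp⟩ := h₁.exists_isPath
  obtain ⟨q, hq⟩ := h₂.exists_isPath
  refine ⟨p.mapLe h.superposition_le, q.mapLe h.superposition_le, hp.mapLe _, hq.mapLe _, ?_⟩
  simp only [SimpleGraph.Walk.support_mapLe_eq_support]
  refine ⟨fun u hup huq => h₁₂ ?_, internal_notMem hp, internal_notMem hq⟩
  exact (p.takeUntil u hup).reachable.trans (q.takeUntil u huq).reachable.symm

end IsSuperposition

end Superpositions

section Noncrossing

variable {α : Type*} [Fintype α] [DecidableEq α] {G : SimpleGraph α} {L : List α} {X : Finset α}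
  {m₁ m₂ : Finset (Sym2 α)} {i j k l : Fin L.length}

theorem NoncrossingList.reachable_of_crossing (hnc : NoncrossingList G L)
    (h : IsSuperposition G L.toFinset X m₁ m₂) (hij : i < j) (hjk : j < k) (hkl : k < l)
    (hik : (superposition m₁ m₂).Reachable (L.get i) (L.get k))
    (hjl : (superposition m₁ m₂).Reachable (L.get j) (L.get l)) :
    (superposition m₁ m₂).Reachable (L.get i) (L.get j) := by
  by_contra hij_sep
  have := h.disjointPaths hik hjl hij_sep
  rw [List.coe_toFinset] at this
  exact hnc i j k l hij hjk hkl this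

theorem NoncrossingList.mem_Ioo_of_reachable (hL : L.Nodup) (hnc : NoncrossingList G L)
    (h : IsSuperposition G L.toFinset X m₁ m₂)
    (hij : (superposition m₁ m₂).Reachable (L.get i) (L.get j)) (hk : k ∈ Finset.Ioo i j)
    (hkl : (superposition m₁ m₂).Reachable (L.get k) (L.get l)) : l ∈ Finset.Ioo i j := by
  rw [Finset.mem_Ioo] at hk ⊢
  have get_mem (t : Fin L.length) : L.get t ∈ L.toFinset := List.mem_toFinset.2 (L.get_mem t)
  have hik : ¬ (superposition m₁ m₂).Reachable (L.get i) (L.get k) := fun hik => by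
    have := h.eq_or_eq_of_reachable (get_mem i) (get_mem j) (get_mem k)
      (hL.injective_get.ne (hk.1.trans hk.2).ne) hij hik
    exact this.elim (hL.injective_get.ne hk.1.ne') (hL.injective_get.ne hk.2.ne)
  have hli : l ≠ i := by
    rintro rfl
    exact hik hkl.symm
  have hlj : l ≠ j := by
    rintro rfl
    exact hik (hij.trans hkl.symm)
  by_contra hl
  rcases hli.lt_or_gt with hli | hil
  · exact hik ((hnc.reachable_of_crossing h hli hk.1 hk.2 hkl.symm hij).symm.trans hkl.symm)
  · have hjl : j < l := hlj.symm.lt_of_le (not_lt.1 fun hlj => hl ⟨hil, hlj⟩)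
    exact hik (hnc.reachable_of_crossing h hk.1 hk.2 hjl hij hkl)

open Classical in
theorem NoncrossingList.filter_reachableFrom_Ioo (hL : L.Nodup) (hnc : NoncrossingList G L)
    (h : IsSuperposition G L.toFinset X m₁ m₂)
    (hij : (superposition m₁ m₂).Reachable (L.get i) (L.get j)) :
    {v ∈ L.toFinset | v ∈ reachableFrom (superposition m₁ m₂) (L.get '' Set.Ioo i j)} =
      (Finset.Ioo i j).image L.get := by
  ext v
  simp only [Finset.mem_filter, List.mem_toFinset, Finset.mem_image]
  constructor
  · rintro ⟨hvL, _, ⟨k, hk, rfl⟩, hkv⟩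
    obtain ⟨l, rfl⟩ := List.mem_iff_get.1 hvL
    exact ⟨l, hnc.mem_Ioo_of_reachable hL h hij (Finset.mem_Ioo.2 hk) hkv, rfl⟩
  · rintro ⟨k, hk, rfl⟩
    exact ⟨L.get_mem k, subset_reachableFrom _ _ ⟨k, Finset.mem_Ioo.1 hk, rfl⟩⟩

theorem NoncrossingList.not_modEq_of_reachable (hL : L.Nodup) (hnc : NoncrossingList G L)
    (h : IsSuperposition G L.toFinset X m₁ m₂) (hlt : i < j)
    (hij : (superposition m₁ m₂).Reachable (L.get i) (L.get j)) : ¬ (i : ℕ) ≡ j [MOD 2] := by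
  classical
  have even_between : Even (j - i - 1 : ℕ) := by
    rw [← Fin.card_Ioo, ← Finset.card_image_of_injective _ hL.injective_get,
      ← hnc.filter_reachableFrom_Ioo hL h hij]
    exact h.even_card_filter_reachableFrom _
  rw [Nat.even_iff] at even_between
  rw [Fin.lt_def] at hlt
  rw [Nat.ModEq]
  lia

/-- No superposition of matchings with defect set `T` has two vertices of `A` in the same connected
component, so any subset of `A` can be exchanged independently of the rest of `A`. -/
def IsSeparated (G : SimpleGraph α) (T A : Finset α) : Prop :=
  ∀ ⦃X m₁ m₂⦄, IsSuperposition G T X m₁ m₂ →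
    ∀ ⦃x⦄, x ∈ A → ∀ ⦃y⦄, y ∈ A → (superposition m₁ m₂).Reachable x y → x = y

theorem NoncrossingList.isSeparated {A : Finset α} (hL : L.Nodup) (hnc : NoncrossingList G L)
    (hAL : A ⊆ L.toFinset)
    (hA : ∀ i j : Fin L.length, L.get i ∈ A → L.get j ∈ A → (i : ℕ) ≡ j [MOD 2]) :
    IsSeparated G L.toFinset A := by
  intro X m₁ m₂ h x hx y hy hxy
  obtain ⟨i, rfl⟩ := List.mem_iff_get.1 (List.mem_toFinset.1 (hAL hx))
  obtain ⟨j, rfl⟩ := List.mem_iff_get.1 (List.mem_toFinset.1 (hAL hy))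
  rcases lt_trichotomy i j with hij | rfl | hji
  · exact absurd (hA i j hx hy) (hnc.not_modEq_of_reachable hL h hij hxy)
  · rfl
  · exact absurd (hA j i hy hx) (hnc.not_modEq_of_reachable hL h hji hxy.symm)

end Noncrossing

section Interleaving

variable {α : Type*} {k : ℕ} {a b : Fin k → α}

theorem getElem?_flatMap_pair_two_mul {β : Type*} (f g : β → α) (l : List β) (i : ℕ) :
    (l.flatMap fun x => [f x, g x])[2 * i]? = l[i]?.map f := by
  induction l generalizing i with
  | nil => rfl
  | cons x l ih =>
    cases i with
    | zero => rfl
    | succ i => simpa [Nat.mul_succ] using ih i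

theorem getElem?_flatMap_pair_two_mul_add_one {β : Type*} (f g : β → α) (l : List β) (i : ℕ) :
    (l.flatMap fun x => [f x, g x])[2 * i + 1]? = l[i]?.map g := by
  induction l generalizing i with
  | nil => rfl
  | cons x l ih =>
    cases i with
    | zero => rfl
    | succ i => simpa [Nat.mul_succ] using ih i

/-- The sequence `a₀, b₀, a₁, b₁, …` that alternates between two families of length `k`. -/
abbrev interleave (a b : Fin k → α) : List α :=
  (List.finRange k).flatMap fun i => [a i, b i]

variable [DecidableEq α]

theorem even_of_get_interleave_mem (hnodup : (interleave a b).Nodup)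
    {t : Fin (interleave a b).length} (ht : (interleave a b).get t ∈ Finset.univ.image a) :
    Even (t : ℕ) := by
  obtain ⟨i, -, hi⟩ := Finset.mem_image.1 ht
  have ht_eq : (t : ℕ) = 2 * i := (List.getElem?_inj t.2 hnodup).1 (by
    rw [getElem?_flatMap_pair_two_mul, List.getElem?_eq_getElem t.2, ← List.get_eq_getElem, ← hi]
    simp)
  exact ht_eq ▸ even_two_mul _

theorem odd_of_get_interleave_mem (hnodup : (interleave a b).Nodup)
    {t : Fin (interleave a b).length} (ht : (interleave a b).get t ∈ Finset.univ.image b) :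
    Odd (t : ℕ) := by
  obtain ⟨i, -, hi⟩ := Finset.mem_image.1 ht
  have ht_eq : (t : ℕ) = 2 * i + 1 := (List.getElem?_inj t.2 hnodup).1 (by
    rw [getElem?_flatMap_pair_two_mul_add_one, List.getElem?_eq_getElem t.2,
      ← List.get_eq_getElem, ← hi]
    simp)
  exact ht_eq ▸ odd_two_mul_add_one _

theorem toFinset_interleave (a b : Fin k → α) :
    (interleave a b).toFinset = Finset.univ.image a ∪ Finset.univ.image b := by
  ext x
  simp [eq_comm, exists_or]

theorem disjoint_image_of_nodup_interleave (hnodup : (interleave a b).Nodup) :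
    Disjoint (Finset.univ.image a) (Finset.univ.image b) := by
  refine Finset.disjoint_left.2 fun x hxa hxb => ?_
  have hx : x ∈ (interleave a b).toFinset := by
    rw [toFinset_interleave]
    exact Finset.mem_union_left _ hxa
  obtain ⟨t, rfl⟩ := List.mem_iff_get.1 (List.mem_toFinset.1 hx)
  exact Nat.not_odd_iff_even.2 (even_of_get_interleave_mem hnodup hxa)
    (odd_of_get_interleave_mem hnodup hxb)

end Interleaving
section ExchangeAlong

variable {α : Type*} [DecidableEq α] {G : SimpleGraph α} {T A S : Finset α}

/-- Swaps the two matchings of a triple `(X, m₁, m₂)` with `IsSuperposition G T X m₁ m₂` on all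
components of their superposition that meet `S`. -/
noncomputable def exchangeAlong (T S : Finset α)
    (x : Finset α × Finset (Sym2 α) × Finset (Sym2 α)) :
    Finset α × Finset (Sym2 α) × Finset (Sym2 α) :=
  let C := reachableFrom (superposition x.2.1 x.2.2) S
  (exchange (· ∈ C) x.1 (T \ x.1), exchange (fun e => ∃ v ∈ e, v ∈ C) x.2.1 x.2.2,
    exchange (fun e => ∃ v ∈ e, v ∈ C) x.2.2 x.2.1)

theorem exchangeAlong_exchangeAlong (S : Finset α)
    {x : Finset α × Finset (Sym2 α) × Finset (Sym2 α)} (hx : x.1 ⊆ T) :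
    exchangeAlong T S (exchangeAlong T S x) = x := by
  simp only [exchangeAlong, superposition_exchange, sdiff_exchange_sdiff _ hx, exchange_exchange]

variable [Fintype α]

open Classical in
/-- The triples `(X, m₁, m₂)` with `IsSuperposition G T X m₁ m₂` in which the first matching misses
exactly the vertices `A₁` of `A`. -/
noncomputable def superpositions (G : SimpleGraph α) (T A A₁ : Finset α) :
    Finset (Finset α × Finset (Sym2 α) × Finset (Sym2 α)) :=
  {x | IsSuperposition G T x.1 x.2.1 x.2.2 ∧ x.1 ∩ A = A₁}

theorem mem_superpositions {A₁ : Finset α} {x : Finset α × Finset (Sym2 α) × Finset (Sym2 α)} :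
    x ∈ superpositions G T A A₁ ↔ IsSuperposition G T x.1 x.2.1 x.2.2 ∧ x.1 ∩ A = A₁ := by
  simp only [superpositions, Finset.mem_filter, Finset.mem_univ, true_and]

theorem IsSeparated.mem_reachableFrom_iff (hA : IsSeparated G T A) {X : Finset α}
    {m₁ m₂ : Finset (Sym2 α)} (h : IsSuperposition G T X m₁ m₂) (hSA : S ⊆ A) {v : α}
    (hv : v ∈ A) : v ∈ reachableFrom (superposition m₁ m₂) S ↔ v ∈ S := by
  refine ⟨?_, fun hvS => subset_reachableFrom _ _ hvS⟩
  rintro ⟨t, ht, htv⟩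
  rwa [← hA h (hSA ht) hv htv]

theorem IsSeparated.exchangeAlong_mem (hA : IsSeparated G T A) (hAT : A ⊆ T) (hSA : S ⊆ A)
    {A₁ : Finset α} {x : Finset α × Finset (Sym2 α) × Finset (Sym2 α)}
    (hx : x ∈ superpositions G T A A₁) :
    exchangeAlong T S x ∈ superpositions G T A (symmDiff A₁ S) := by
  obtain ⟨h, rfl⟩ := mem_superpositions.1 hx
  refine mem_superpositions.2
    ⟨h.exchange fun e he v hv => edge_meets_reachableFrom_iff he hv, ?_⟩
  ext v
  have hvC := hA.mem_reachableFrom_iff h hSA (v := v)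
  have hvT := @hAT v
  have hvA := @hSA v
  simp only [exchangeAlong, Finset.mem_inter, mem_exchange, Finset.mem_sdiff,
    Finset.mem_symmDiff]
  tauto

theorem sum_pmSum_mul_pmSum_eq_sum_superpositions {R : Type*} [CommRing R] (G : SimpleGraph α)
    (w : Sym2 α → R) (T A A₁ : Finset α) :
    ∑ X ∈ T.powerset with X ∩ A = A₁, pmSum G w Xᶜ * pmSum G w (T \ X)ᶜ =
      ∑ x ∈ superpositions G T A A₁, (∏ e ∈ x.2.1, w e) * ∏ e ∈ x.2.2, w e := by
  classical
  simp only [pmSum, Finset.sum_mul_sum, ← Finset.sum_product']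
  let matchings (X : Finset α) : Finset (Finset (Sym2 α) × Finset (Sym2 α)) :=
    Finset.univ.filter (IsPMOn G Xᶜ) ×ˢ Finset.univ.filter (IsPMOn G (T \ X)ᶜ)
  have mem_iff (x : Finset α × Finset (Sym2 α) × Finset (Sym2 α)) :
      x ∈ superpositions G T A A₁ ↔
        x.1 ∈ T.powerset.filter (· ∩ A = A₁) ∧ x.2 ∈ matchings x.1 := by
    simp only [matchings, mem_superpositions, Finset.mem_filter, Finset.mem_powerset,
      Finset.mem_product, Finset.mem_univ, true_and]
    exact ⟨fun ⟨h, hA⟩ => ⟨⟨h.subset, hA⟩, h.left, h.right⟩,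
      fun ⟨⟨hT, hA⟩, hleft, hright⟩ => ⟨⟨hT, hleft, hright⟩, hA⟩⟩
  rw [Finset.sum_finset_product _ _ matchings mem_iff]

theorem IsSeparated.sum_pmSum_mul_pmSum_symmDiff {R : Type*} [CommRing R]
    (hA : IsSeparated G T A) (hAT : A ⊆ T) (hSA : S ⊆ A) (w : Sym2 α → R) (A₁ : Finset α) :
    ∑ X ∈ T.powerset with X ∩ A = A₁, pmSum G w Xᶜ * pmSum G w (T \ X)ᶜ =
      ∑ X ∈ T.powerset with X ∩ A = symmDiff A₁ S, pmSum G w Xᶜ * pmSum G w (T \ X)ᶜ := by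
  have involutive {A₁ : Finset α} (x) (hx : x ∈ superpositions G T A A₁) :
      exchangeAlong T S (exchangeAlong T S x) = x :=
    exchangeAlong_exchangeAlong S (mem_superpositions.1 hx).1.subset
  simp only [sum_pmSum_mul_pmSum_eq_sum_superpositions]
  refine Finset.sum_nbij' (exchangeAlong T S) (exchangeAlong T S)
    (fun x hx => hA.exchangeAlong_mem hAT hSA hx) (fun x hx => ?_) involutive involutive
    fun x _ => (prod_exchange_mul_prod_exchange w _ _ _).symm
  simpa only [symmDiff_symmDiff_cancel_right] using hA.exchangeAlong_mem hAT hSA hx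

end ExchangeAlong

section Condensation

variable {α : Type*} [DecidableEq α]

theorem sum_powerset_union_filter_inter_eq {M : Type*} [AddCommMonoid M] {A A₁ B : Finset α}
    (hAB : Disjoint A B) (hA₁ : A₁ ⊆ A) (f : Finset α → M) :
    ∑ X ∈ (A ∪ B).powerset with X ∩ A = A₁, f X = ∑ Y ∈ B.powerset, f (A₁ ∪ Y) := by
  rw [Finset.disjoint_left] at hAB
  refine (Finset.sum_nbij' (A₁ ∪ ·) (· ∩ B) ?_ ?_ ?_ ?_ fun _ _ => rfl).symm <;>
    simp only [Finset.mem_filter, Finset.mem_powerset] <;> grind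

theorem union_sdiff_union_eq_union_sdiff {A A₁ A₂ B Y : Finset α} (hAB : Disjoint A B)
    (hpart : A₁ ∪ A₂ = A) (hdisj : Disjoint A₁ A₂) (hY : Y ⊆ B) :
    (A ∪ B) \ (A₁ ∪ Y) = A₂ ∪ (B \ Y) := by
  grind [Finset.disjoint_left]

theorem sum_pmSum_filter_card_mod_two {R : Type*} [CommRing R] [Fintype α] {G : SimpleGraph α}
    (hα : Even (Fintype.card α)) (w : Sym2 α → R) {S : Finset α} {F : Finset (Finset α)}
    (hF : ∀ Y ∈ F, Disjoint S Y) (f : Finset α → R) :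
    ∑ Y ∈ F with Y.card % 2 = S.card % 2, pmSum G w (Finset.univ \ (S ∪ Y)) * f Y =
      ∑ Y ∈ F, pmSum G w (Finset.univ \ (S ∪ Y)) * f Y := by
  refine Finset.sum_filter_of_ne fun Y hY hne => ?_
  by_contra hodd
  refine hne (mul_eq_zero_of_left (pmSum_eq_zero_of_not_even_card w fun heven => hodd ?_) _)
  have hcard := Finset.card_sdiff_add_card_eq_card (S ∪ Y).subset_univ
  rw [Finset.card_univ, Finset.card_union_of_disjoint (hF Y hY)] at hcard
  rw [Nat.even_iff] at hα heven
  lia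

theorem sum_pmSum_filter_even_card {R : Type*} [CommRing R] [Fintype α] {G : SimpleGraph α}
    (hα : Even (Fintype.card α)) (w : Sym2 α → R) (F : Finset (Finset α)) (f : Finset α → R) :
    ∑ W ∈ F with Even W.card, pmSum G w (Finset.univ \ W) * f W =
      ∑ W ∈ F, pmSum G w (Finset.univ \ W) * f W := by
  simpa only [Finset.empty_union, Finset.card_empty, Nat.zero_mod, ← Nat.even_iff] using
    sum_pmSum_filter_card_mod_two hα w (fun W (_ : W ∈ F) => Finset.disjoint_empty_left W) f

theorem generalized_condensation_even_general {R : Type*} [Fintype α] [CommRing R]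
    (G : SimpleGraph α) (w : Sym2 α → R) {L : List α} (hL : L.Nodup) (hnc : NoncrossingList G L)
    {A B A₁ A₂ : Finset α} (hAB : Disjoint A B) (hABL : A ∪ B = L.toFinset)
    (hA : ∀ i j : Fin L.length, L.get i ∈ A → L.get j ∈ A → (i : ℕ) ≡ j [MOD 2])
    (hpart : A₁ ∪ A₂ = A) (hdisj : Disjoint A₁ A₂) :
    ∑ W ∈ B.powerset, pmSum G w (Finset.univ \ W) * pmSum G w (Finset.univ \ (A ∪ (B \ W))) =
      ∑ Y ∈ B.powerset, pmSum G w (Finset.univ \ (A₁ ∪ Y)) *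
        pmSum G w (Finset.univ \ (A₂ ∪ (B \ Y))) := by
  have hAT : A ⊆ A ∪ B := Finset.subset_union_left
  have hA₁A : A₁ ⊆ A := hpart ▸ Finset.subset_union_left
  have hsep : IsSeparated G (A ∪ B) A := hABL ▸ hnc.isSeparated hL (hABL ▸ hAT) hA
  have hsum := hsep.sum_pmSum_mul_pmSum_symmDiff hAT hA₁A w ∅
  rw [← Finset.bot_eq_empty, bot_symmDiff, Finset.bot_eq_empty,
    sum_powerset_union_filter_inter_eq hAB A.empty_subset,
    sum_powerset_union_filter_inter_eq hAB hA₁A] at hsum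
  simp only [Finset.compl_eq_univ_sdiff] at hsum
  convert hsum using 2 with W hW Y hY
  · rw [union_sdiff_union_eq_union_sdiff hAB (Finset.empty_union A) (Finset.disjoint_empty_left A)
      (Finset.mem_powerset.1 hW), Finset.empty_union]
  · rw [union_sdiff_union_eq_union_sdiff hAB hpart hdisj (Finset.mem_powerset.1 hY)]

end Condensation

/-- Generalized graphical condensation (Theorem 2.1). -/
theorem generalized_condensation_even {α R : Type*} [Fintype α] [DecidableEq α] [CommRing R]
    (G : SimpleGraph α) (w : Sym2 α → R) (n k : ℕ)
    (hcard : Fintype.card α = 2 * n) (hk2 : 2 ≤ k) (hkn : k ≤ n)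
    (a b : Fin k → α)
    (hdist : ((List.finRange k).flatMap (fun i => [a i, b i])).Nodup)
    (hnc : NoncrossingList G ((List.finRange k).flatMap (fun i => [a i, b i])))
    (A B : Finset α) (hA : A = Finset.univ.image a) (hB : B = Finset.univ.image b)
    (A₁ A₂ : Finset α) (hpart : A₁ ∪ A₂ = A) (hdisj : Disjoint A₁ A₂) :
    ∑ W ∈ B.powerset.filter (fun W => Even W.card),
        pmSum G w (Finset.univ \ W) * pmSum G w (Finset.univ \ (A ∪ (B \ W))) =
    ∑ Y ∈ B.powerset.filter (fun Y => Y.card % 2 = A₁.card % 2),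
        pmSum G w (Finset.univ \ (A₁ ∪ Y)) *
          pmSum G w (Finset.univ \ (A₂ ∪ (B \ Y))) := by
  subst hA hB
  have hα : Even (Fintype.card α) := hcard ▸ even_two_mul n
  have hAB := disjoint_image_of_nodup_interleave hdist
  have hA₁ (Y) (hY : Y ∈ (Finset.univ.image b).powerset) : Disjoint A₁ Y :=
    hAB.mono (hpart ▸ Finset.subset_union_left) (Finset.mem_powerset.1 hY)
  rw [sum_pmSum_filter_even_card hα, sum_pmSum_filter_card_mod_two hα w hA₁]
  exact generalized_condensation_even_general G w hdist hnc hAB (toFinset_interleave a b).symm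
    (fun i j hi hj => (Nat.even_iff.1 (even_of_get_interleave_mem hdist hi)).trans
      (Nat.even_iff.1 (even_of_get_interleave_mem hdist hj)).symm) hpart hdisj
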